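/- Let m, n ≥ 1 be integers. There exists a continuous spectrum-shrinking map φ : M_n → M_m if and only if n divides m; and when n divides m, every continuous spectrum-shrinking map φ : M_n → M_m satisfies k_{φ(X)} = (k_X)^{m/n} for all X ∈ M_n (in particular, sp(φ(X)) = sp(X) for all X). -/

import Mathlib

open Matrix

/-!
A matrix with distinct eigenvalues is `S * diagonal z * S⁻¹` with `S` invertible and `z` injective.
The pairs `(S, z)` form a connected space, because the complement of a complex hypersurface is
connected: two of its points span a complex line which meets the hypersurface in finitely many
points. Over this space `φ (S * diagonal z * S⁻¹)` depends continuously on `(S, z)` and has its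
eigenvalues among the distinct numbers `z i`, so the multiplicity `k i` of `z i` does not depend
on `(S, z)`. Permuting the entries of `z` and the columns of `S` does not change the matrix, so
all the `k i` coincide with a single `k`, and `φ A` has characteristic polynomial `A.charpoly ^ k`.
This extends to every `A` by density of the matrices with separable characteristic polynomial, and
comparing degrees gives `m = n * k`.
-/

open Polynomial Topology

section ProductsOfLinearFactors

variable {ι K : Type*} [Fintype ι] [CommRing K] [IsDomain K]

theorem eq_prod_X_sub_C_pow_rootMultiplicity {p : K[X]} (hmonic : p.Monic) (hsplits : p.Splits)
    {z : ι → K} (hz : Function.Injective z) (hroots : ∀ a, p.IsRoot a → a ∈ Set.range z) :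
    p = ∏ i, (X - C (z i)) ^ p.rootMultiplicity (z i) := by
  classical
  have hsub : p.roots.toFinset ⊆ Finset.univ.image z := fun a ha => by
    simpa using hroots a (isRoot_of_mem_roots (Multiset.mem_toFinset.1 ha))
  calc
    p = ∏ a ∈ p.roots.toFinset, (X - C a) ^ p.roots.count a := by
      rw [← Finset.prod_multiset_map_count]
      exact hsplits.eq_prod_roots_of_monic hmonic
    _ = ∏ a ∈ Finset.univ.image z, (X - C a) ^ p.roots.count a :=
      Finset.prod_subset hsub fun a _ ha => by
        rw [Multiset.count_eq_zero_of_notMem (by simpa only [Multiset.mem_toFinset] using ha),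
          pow_zero]
    _ = ∏ i, (X - C (z i)) ^ p.rootMultiplicity (z i) := by
      simp only [Finset.prod_image hz.injOn, count_roots]

theorem rootMultiplicity_prod_X_sub_C_pow {z : ι → K} (hz : Function.Injective z) (k : ι → ℕ)
    (i : ι) : (∏ j, (X - C (z j)) ^ k j).rootMultiplicity (z i) = k i := by
  classical
  have hne : ∏ j, (X - C (z j)) ^ k j ≠ 0 :=
    Finset.prod_ne_zero_iff.2 fun j _ => pow_ne_zero _ (X_sub_C_ne_zero _)
  calc
    (∏ j, (X - C (z j)) ^ k j).rootMultiplicity (z i) = ∑ j, k j * if i = j then 1 else 0 := by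
      rw [← count_roots, roots_prod _ _ hne]
      simp only [roots_pow, roots_X_sub_C, Multiset.count_bind, Multiset.count_nsmul,
        Multiset.count_singleton, hz.eq_iff, Finset.sum]
    _ = k i := by simp

theorem prod_X_sub_C_pow_injective {z : ι → K} (hz : Function.Injective z) :
    Function.Injective fun k : ι → ℕ => ∏ i, (X - C (z i)) ^ k i := fun k l hkl => by
  ext i
  rw [← rootMultiplicity_prod_X_sub_C_pow hz k i, ← rootMultiplicity_prod_X_sub_C_pow hz l i]
  exact congrArg (rootMultiplicity (z i)) hkl

theorem exists_injective_isRoot_of_separable {p : K[X]} (hsplits : p.Splits)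
    (hsep : p.Separable) (hcard : p.natDegree = Fintype.card ι) :
    ∃ z : ι → K, Function.Injective z ∧ ∀ i, p.IsRoot (z i) := by
  classical
  have hroots : Fintype.card p.roots.toFinset = Fintype.card ι := by
    rw [Fintype.card_coe, Multiset.toFinset_card_of_nodup (nodup_roots hsep),
      ← hsplits.natDegree_eq_card_roots, hcard]
  let e : ι ≃ p.roots.toFinset := (Fintype.equivOfCardEq hroots).symm
  exact ⟨fun i => e i, Subtype.val_injective.comp e.injective,
    fun i => isRoot_of_mem_roots (Multiset.mem_toFinset.1 (e i).2)⟩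

end ProductsOfLinearFactors

section ContinuousFamilies

theorem isLocallyConstant_of_finite_range_of_isClosed_fiber {T Y : Type*} [TopologicalSpace T]
    {f : T → Y} (hfinite : (Set.range f).Finite) (hclosed : ∀ y, IsClosed (f ⁻¹' {y})) :
    IsLocallyConstant f := fun s => by
  have hcompl : (f ⁻¹' s)ᶜ = ⋃ y ∈ Set.range f \ s, f ⁻¹' {y} := by
    ext t
    simp
  rw [← isClosed_compl_iff, hcompl]
  exact hfinite.sdiff.isClosed_biUnion fun y _ => hclosed y

theorem exists_forall_eq_prod_X_sub_C_pow {T ι K : Type*} [TopologicalSpace T]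
    [PreconnectedSpace T] [Fintype ι] [CommRing K] [IsDomain K] [Infinite K] [TopologicalSpace K]
    [IsTopologicalRing K] [T2Space K] {p : T → K[X]} {z : T → ι → K} {d : ℕ}
    (hp : ∀ a, Continuous fun t => (p t).eval a) (hz : Continuous z)
    (hinj : ∀ t, Function.Injective (z t)) (hdeg : ∀ t, (p t).natDegree ≤ d)
    (hfactor : ∀ t, ∃ k : ι → ℕ, p t = ∏ i, (X - C (z t i)) ^ k i) :
    ∃ k : ι → ℕ, ∀ t, p t = ∏ i, (X - C (z t i)) ^ k i := by
  classical
  choose k hk using hfactor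
  have hfinite : (Set.range k).Finite := by
    refine (Set.finite_Iic fun _ => d).subset (Set.range_subset_iff.2 fun t i => ?_)
    calc
      k t i = (p t).roots.count (z t i) := by
        rw [count_roots, hk t, rootMultiplicity_prod_X_sub_C_pow (hinj t)]
      _ ≤ (p t).natDegree := (Multiset.count_le_card _ _).trans (card_roots' _)
      _ ≤ d := hdeg t
  have hfiber (c : ι → ℕ) :
      k ⁻¹' {c} = ⋂ a : K, {t | (p t).eval a = ∏ i, (a - z t i) ^ c i} := by
    ext t
    calc
      k t = c ↔ p t = ∏ i, (X - C (z t i)) ^ c i := by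
        rw [hk t, (prod_X_sub_C_pow_injective (hinj t)).eq_iff]
      _ ↔ t ∈ ⋂ a : K, {t | (p t).eval a = ∏ i, (a - z t i) ^ c i} := by
        simp only [Set.mem_iInter, Set.mem_ofPred_eq]
        exact ⟨fun h a => by simp [h, eval_prod], fun h => Polynomial.funext (by simpa [eval_prod])⟩
  have hconst : IsLocallyConstant k :=
    isLocallyConstant_of_finite_range_of_isClosed_fiber hfinite fun c => by
      rw [hfiber]
      exact isClosed_iInter fun a => isClosed_eq (hp a) (by fun_prop)
  rcases isEmpty_or_nonempty T with _ | ⟨⟨t₀⟩⟩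
  · exact ⟨0, isEmptyElim⟩
  · exact ⟨k t₀, fun t => hconst.apply_eq_of_preconnectedSpace t t₀ ▸ hk t⟩

end ContinuousFamilies

section NonvanishingLocus

variable {σ : Type*}

theorem finite_setOfPred_eval_lineMap_eq_zero {K : Type*} [CommRing K] [IsDomain K]
    (p : MvPolynomial σ K) (x : σ → K) {y : σ → K} (hy : p.eval y ≠ 0) :
    {t : K | p.eval (AffineMap.lineMap x y t) = 0}.Finite := by
  let q : K[X] := p.aeval fun i => X * C (y i - x i) + C (x i)
  have hq (t : K) : q.eval t = p.eval (AffineMap.lineMap x y t) := by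
    have hC : (evalRingHom t).comp (algebraMap K K[X]) = RingHom.id K := by
      ext a
      simp
    have hline : (fun i => (X * C (y i - x i) + C (x i)).eval t) = AffineMap.lineMap x y t := by
      ext i
      simp [AffineMap.lineMap_apply]
    simp only [q, MvPolynomial.aeval_def, MvPolynomial.polynomial_eval_eval₂, hC, hline,
      MvPolynomial.eval₂_id]
  have hq₀ : q ≠ 0 := by
    rintro h
    apply hy
    simpa [h] using (hq 1).symm
  simpa only [IsRoot.def, hq] using finite_setOfPred_isRoot hq₀

theorem dense_setOfPred_eval_ne_zero {𝕜 : Type*} [NontriviallyNormedField 𝕜]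
    (p : MvPolynomial σ 𝕜) {y : σ → 𝕜} (hy : p.eval y ≠ 0) : Dense {x | p.eval x ≠ 0} := by
  intro x
  have hdense := dense_univ.sdiff_finite (finite_setOfPred_eval_lineMap_eq_zero p x hy)
  have hx := map_mem_closure (t := {x | p.eval x ≠ 0})
    (AffineMap.lineMap_continuous (p := x) (q := y)) (hdense 0) fun t ht => ht.2
  simpa using hx

theorem isPreconnected_setOfPred_eval_ne_zero (p : MvPolynomial σ ℂ) :
    IsPreconnected {x | p.eval x ≠ 0} := by
  refine isPreconnected_of_forall_pair fun x hx y hy => ?_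
  have hcountable := (finite_setOfPred_eval_lineMap_eq_zero p x hy).countable
  have hconn := hcountable.isConnected_compl_of_one_lt_rank
    (Complex.rank_real_complex.symm ▸ Nat.one_lt_ofNat)
  exact ⟨AffineMap.lineMap x y '' {t : ℂ | p.eval (AffineMap.lineMap x y t) = 0}ᶜ,
    Set.image_subset_iff.2 fun t ht => ht, ⟨0, by simpa, by simp⟩, ⟨1, by simpa, by simp⟩,
    hconn.isPreconnected.image _ AffineMap.lineMap_continuous.continuousOn⟩

theorem isPreconnected_setOfPred_injective (ι : Type*) [Finite ι] :
    IsPreconnected {z : ι → ℂ | Function.Injective z} := by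
  classical
  have := Fintype.ofFinite ι
  convert isPreconnected_setOfPred_eval_ne_zero
    (∏ p ∈ (Finset.univ : Finset ι).offDiag, (.X p.1 - .X p.2)) using 2 with z
  simp [Finset.prod_ne_zero_iff, sub_ne_zero, Function.Injective, not_imp_not]

end NonvanishingLocus

theorem isUnit_resultant_iff_isCoprime_of_natDegree_le {R : Type*} [CommRing R] {p q : R[X]} {d : ℕ}
    (hp : p.Monic) (hd : q.natDegree ≤ d) :
    IsUnit (resultant p q p.natDegree d) ↔ IsCoprime p q := by
  obtain ⟨k, rfl⟩ := Nat.exists_eq_add_of_le hd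
  rw [resultant_add_right_deg _ _ _ _ _ le_rfl, hp.coeff_natDegree, one_pow, one_mul,
    isUnit_resultant_iff_isCoprime hp]

section MatrixSpace

variable {n : Type*} [Fintype n] [DecidableEq n]

theorem continuous_eval_charpoly {R : Type*} [CommRing R] [TopologicalSpace R]
    [IsTopologicalRing R] (a : R) :
    Continuous fun A : Matrix n n R => A.charpoly.eval a := by
  simp only [eval_charpoly]
  fun_prop

variable (n)

theorem isEmbedding_generalLinearGroup_val (K : Type*) [Field K] [TopologicalSpace K]
    [IsTopologicalDivisionRing K] : IsEmbedding (Units.val : GL n K → Matrix n n K) := by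
  refine Units.isEmbedding_val_mk' (f := Inv.inv) (fun A hA => ?_) fun S => (coe_units_inv S).symm
  refine (continuousAt_matrix_inv A ?_).continuousWithinAt
  rw [Ring.inverse_eq_inv']
  exact continuousAt_inv₀ ((isUnit_iff_isUnit_det A).1 hA).ne_zero

theorem preconnectedSpace_generalLinearGroup_complex : PreconnectedSpace (GL n ℂ) := by
  have hrange : Set.range (Units.val : GL n ℂ → Matrix n n ℂ) =
      (fun x => Matrix.of x.curry) '' {x | (mvPolynomialX n n ℂ).det.eval x ≠ 0} := by
    ext A
    simp only [eval_det_mvPolynomialX, ← isUnit_iff_ne_zero, ← isUnit_iff_isUnit_det]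
    exact ⟨fun hA => ⟨fun p => A p.1 p.2, hA, rfl⟩, fun ⟨_, hx, hA⟩ => hA ▸ hx⟩
  refine ⟨(isEmbedding_generalLinearGroup_val n ℂ).isInducing.isPreconnected_image.1 ?_⟩
  rw [Set.image_univ, hrange]
  refine (isPreconnected_setOfPred_eval_ne_zero _).image _ (Continuous.continuousOn ?_)
  exact continuous_matrix fun i j => continuous_apply (i, j)

theorem exists_eval_ne_zero_iff_charpoly_separable (K : Type*) [Field K] :
    ∃ p : MvPolynomial (n × n) K,
      ∀ x, p.eval x ≠ 0 ↔ (Matrix.of x.curry).charpoly.Separable := by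
  refine ⟨resultant (charpoly.univ K n) (derivative (charpoly.univ K n))
    (Fintype.card n) (Fintype.card n - 1), fun x => ?_⟩
  have hmap : (charpoly.univ K n).map (MvPolynomial.eval x) = (Matrix.of x.curry).charpoly :=
    charpoly.univ_map_eval₂Hom n (RingHom.id K) x
  have hdeg := charpoly_natDegree_eq_dim (Matrix.of x.curry)
  rw [← resultant_map_map, ← derivative_map, hmap, separable_def,
    ← isUnit_resultant_iff_isCoprime_of_natDegree_le (charpoly_monic _) (natDegree_derivative_le _),
    hdeg, isUnit_iff_ne_zero]

theorem dense_setOfPred_charpoly_separable (𝕜 : Type*) [NontriviallyNormedField 𝕜] :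
    Dense {A : Matrix n n 𝕜 | A.charpoly.Separable} := by
  obtain ⟨p, hp⟩ := exists_eval_ne_zero_iff_charpoly_separable n 𝕜
  obtain ⟨e, he⟩ := exists_injective_nat n
  let z (i : n) : 𝕜 := Infinite.natEmbedding 𝕜 (e i)
  have hz : p.eval (fun i => diagonal z i.1 i.2) ≠ 0 := by
    refine (hp _).2 ?_
    change (diagonal z).charpoly.Separable
    rw [charpoly_diagonal, separable_prod_X_sub_C_iff]
    exact (Infinite.natEmbedding 𝕜).injective.comp he
  have hsurj : Function.Surjective fun x : n × n → 𝕜 => Matrix.of x.curry :=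
    fun A => ⟨fun i => A i.1 i.2, rfl⟩
  refine (hsurj.denseRange.dense_image ?_ (dense_setOfPred_eval_ne_zero p hz)).mono ?_
  · exact continuous_matrix fun i j => continuous_apply (i, j)
  · exact Set.image_subset_iff.2 fun x hx => (hp x).1 hx

end MatrixSpace

section Diagonalization

variable {n K : Type*} [Fintype n] [DecidableEq n] [Field K]

theorem exists_eq_conj_diagonal_of_isRoot_charpoly {A : Matrix n n K} {z : n → K}
    (hz : Function.Injective z) (hroot : ∀ i, A.charpoly.IsRoot (z i)) :
    ∃ S : GL n K, A = S.val * diagonal z * S.val⁻¹ := by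
  have hvec (i : n) : ∃ v, Module.End.HasEigenvector (toLin' A) (z i) v := by
    apply Module.End.HasEigenvalue.exists_hasEigenvector
    rw [Module.End.hasEigenvalue_iff_mem_spectrum, spectrum_toLin']
    exact mem_spectrum_iff_isRoot_charpoly.2 (hroot i)
  choose v hv using hvec
  have hindep : LinearIndependent K (of v)ᵀ.col :=
    Module.End.eigenvectors_linearIndependent' (toLin' A) z hz v hv
  obtain ⟨S, hS⟩ := linearIndependent_cols_iff_isUnit.1 hindep
  have hcomm : A * S.val = S.val * diagonal z := by
    ext i j
    have hij := congrFun (hv j).apply_eq_smul i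
    rw [toLin'_apply] at hij
    rw [hS, mul_diagonal, mul_comm]
    exact hij
  exact ⟨S, by rw [← hcomm, ← coe_units_inv, Units.mul_inv_cancel_right]⟩

theorem charpoly_conj_diagonal (S : GL n K) (z : n → K) :
    (S.val * diagonal z * S.val⁻¹).charpoly = ∏ i, (X - C (z i)) := by
  rw [charpoly_units_conj, charpoly_diagonal]

theorem spectrum_conj_diagonal (S : GL n K) (z : n → K) :
    spectrum K (S.val * diagonal z * S.val⁻¹) = Set.range z := by
  rw [← coe_units_inv, spectrum.units_conjugate, spectrum_diagonal]

end Diagonalization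

section CharpolyPower

variable {n m : Type*} [Fintype n] [DecidableEq n] [Fintype m] [DecidableEq m]

theorem card_eq_card_mul_of_charpoly_eq_pow {R : Type*} [CommRing R] [Nontrivial R]
    {A : Matrix n n R} {B : Matrix m m R} {k : ℕ} (h : B.charpoly = A.charpoly ^ k) :
    Fintype.card m = Fintype.card n * k := by
  rw [← charpoly_natDegree_eq_dim B, h, (charpoly_monic A).natDegree_pow,
    charpoly_natDegree_eq_dim, mul_comm]

theorem spectrum_eq_of_charpoly_eq_pow {K : Type*} [Field K] {A : Matrix n n K}
    {B : Matrix m m K} {k : ℕ} (hk : k ≠ 0) (h : B.charpoly = A.charpoly ^ k) :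
    spectrum K B = spectrum K A := by
  ext a
  simp [mem_spectrum_iff_isRoot_charpoly, h, hk]

end CharpolyPower

section SpectrumShrinking

variable {n m : Type*} [Fintype n] [DecidableEq n] [Fintype m] [DecidableEq m]
  {φ : Matrix n n ℂ → Matrix m m ℂ}

theorem exists_charpoly_map_conj_diagonal_eq_prod (hφ : Continuous φ)
    (hs : ∀ A, spectrum ℂ (φ A) ⊆ spectrum ℂ A) :
    ∃ k : n → ℕ, ∀ (S : GL n ℂ) (z : n → ℂ), Function.Injective z →
      (φ (S.val * diagonal z * S.val⁻¹)).charpoly = ∏ i, (X - C (z i)) ^ k i := by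
  have := preconnectedSpace_generalLinearGroup_complex n
  have := isPreconnected_iff_preconnectedSpace.1 (isPreconnected_setOfPred_injective n)
  let A (t : GL n ℂ × {z : n → ℂ | Function.Injective z}) : Matrix n n ℂ :=
    t.1.val * diagonal t.2.1 * t.1.val⁻¹
  have hA : Continuous A := by
    simp only [A, ← coe_units_inv]
    fun_prop
  have hroots t (a : ℂ) (ha : (φ (A t)).charpoly.IsRoot a) : a ∈ Set.range t.2.1 := by
    rw [← spectrum_conj_diagonal t.1 t.2.1]
    exact hs _ (mem_spectrum_iff_isRoot_charpoly.2 ha)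
  obtain ⟨k, hk⟩ := exists_forall_eq_prod_X_sub_C_pow (p := fun t => (φ (A t)).charpoly)
    (z := fun t => t.2.1) (fun a => (continuous_eval_charpoly a).comp (hφ.comp hA))
    (by fun_prop) (fun t => t.2.2) (fun t => (charpoly_natDegree_eq_dim _).le)
    fun t => ⟨_, eq_prod_X_sub_C_pow_rootMultiplicity (charpoly_monic _) (IsAlgClosed.splits _)
      t.2.2 (hroots t)⟩
  exact ⟨k, fun S z hz => hk (S, ⟨z, hz⟩)⟩

theorem exists_charpoly_map_conj_diagonal_eq_pow (hφ : Continuous φ)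
    (hs : ∀ A, spectrum ℂ (φ A) ⊆ spectrum ℂ A) :
    ∃ k : ℕ, ∀ (S : GL n ℂ) (z : n → ℂ), Function.Injective z →
      (φ (S.val * diagonal z * S.val⁻¹)).charpoly =
        (S.val * diagonal z * S.val⁻¹).charpoly ^ k := by
  obtain ⟨k, hk⟩ := exists_charpoly_map_conj_diagonal_eq_prod hφ hs
  obtain ⟨e, he⟩ := exists_injective_nat n
  let z (i : n) : ℂ := e i
  have hz : Function.Injective z := Nat.cast_injective.comp he
  have hk_const (i j : n) : k i = k j := by
    let σ := Equiv.swap i j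
    have hroot (a : n) : (diagonal z).charpoly.IsRoot (z (σ a)) := by
      rw [← mem_spectrum_iff_isRoot_charpoly, spectrum_diagonal]
      exact ⟨σ a, rfl⟩
    obtain ⟨S, hS⟩ := exists_eq_conj_diagonal_of_isRoot_charpoly (hz.comp σ.injective) hroot
    have hprod : ∏ a, (X - C (z a)) ^ k a = ∏ a, (X - C (z a)) ^ k (σ a) := by
      calc
        ∏ a, (X - C (z a)) ^ k a = (φ (diagonal z)).charpoly := by simpa using (hk 1 z hz).symm
        _ = ∏ a, (X - C (z (σ a))) ^ k a := hS ▸ hk S (z ∘ σ) (hz.comp σ.injective)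
        _ = ∏ a, (X - C (z a)) ^ k (σ a) := Fintype.prod_equiv σ _ _ fun a => by simp [σ]
    simpa [σ] using congrFun (prod_X_sub_C_pow_injective hz hprod) i
  obtain ⟨c, hc⟩ : ∃ c, ∀ i, k i = c := by
    rcases isEmpty_or_nonempty n with _ | ⟨⟨i⟩⟩
    · exact ⟨0, isEmptyElim⟩
    · exact ⟨k i, fun j => hk_const j i⟩
  refine ⟨c, fun S z hz => ?_⟩
  simp only [hk S z hz, charpoly_conj_diagonal, hc, Finset.prod_pow]

theorem exists_charpoly_map_eq_pow (hφ : Continuous φ)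
    (hs : ∀ A, spectrum ℂ (φ A) ⊆ spectrum ℂ A) :
    ∃ k : ℕ, ∀ A, (φ A).charpoly = A.charpoly ^ k := by
  obtain ⟨k, hk⟩ := exists_charpoly_map_conj_diagonal_eq_pow hφ hs
  have hsep (A : Matrix n n ℂ) (hA : A.charpoly.Separable) :
      (φ A).charpoly = A.charpoly ^ k := by
    obtain ⟨z, hz, hroot⟩ := exists_injective_isRoot_of_separable (IsAlgClosed.splits _) hA
      (charpoly_natDegree_eq_dim A)
    obtain ⟨S, rfl⟩ := exists_eq_conj_diagonal_of_isRoot_charpoly hz hroot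
    exact hk S z hz
  refine ⟨k, fun A => Polynomial.funext fun a => ?_⟩
  have heval : (fun A => (φ A).charpoly.eval a) = fun A => A.charpoly.eval a ^ k :=
    ((continuous_eval_charpoly a).comp hφ).ext_on (dense_setOfPred_charpoly_separable n ℂ)
      ((continuous_eval_charpoly a).pow k) fun A hA => by
        simp only [hsep A hA, eval_pow, Function.comp_apply]
  rw [eval_pow]
  exact congrFun heval A

end SpectrumShrinking

/-- The algebra homomorphism that repeats a matrix `k` times along the diagonal, up to a
reordering of the basis. It is built by replacing each entry `a` by the scalar matrix `a • 1`. -/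
def amplification (R : Type*) [CommSemiring R] (n k : ℕ) :
    Matrix (Fin n) (Fin n) R →ₐ[R] Matrix (Fin (n * k)) (Fin (n * k)) R :=
  (reindexAlgEquiv R R finProdFinEquiv).toAlgHom.comp
    ((compAlgEquiv (Fin n) (Fin k) R R).toAlgHom.comp
      (Algebra.ofId R (Matrix (Fin k) (Fin k) R)).mapMatrix)

/-- For integers `m, n ≥ 1`, there exists a continuous spectrum-shrinking
map `φ : M_n → M_m` iff `n ∣ m`; and when `n ∣ m`, every continuous spectrum-shrinking
`φ : M_n → M_m` satisfies `k_{φ(X)} = (k_X)^(m/n)` (in particular it preserves spectra). -/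
theorem exists_continuous_spectrum_shrinker_Mn_iff (n m : ℕ) (hn : 1 ≤ n) (hm : 1 ≤ m) :
    ((∃ φ : Matrix (Fin n) (Fin n) ℂ → Matrix (Fin m) (Fin m) ℂ,
        Continuous φ ∧ ∀ X, spectrum ℂ (φ X) ⊆ spectrum ℂ X) ↔ n ∣ m) ∧
    (n ∣ m → ∀ φ : Matrix (Fin n) (Fin n) ℂ → Matrix (Fin m) (Fin m) ℂ,
        Continuous φ → (∀ X, spectrum ℂ (φ X) ⊆ spectrum ℂ X) →
        ∀ X, (φ X).charpoly = X.charpoly ^ (m / n) ∧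
          spectrum ℂ (φ X) = spectrum ℂ X) := by
  have hpow (φ : Matrix (Fin n) (Fin n) ℂ → Matrix (Fin m) (Fin m) ℂ) (hφ : Continuous φ)
      (hs : ∀ X, spectrum ℂ (φ X) ⊆ spectrum ℂ X) :
      ∃ k, m = n * k ∧ ∀ X, (φ X).charpoly = X.charpoly ^ k := by
    obtain ⟨k, hk⟩ := exists_charpoly_map_eq_pow hφ hs
    exact ⟨k, by simpa using card_eq_card_mul_of_charpoly_eq_pow (hk 0), hk⟩
  refine ⟨⟨fun ⟨φ, hφ, hs⟩ => ?_, fun ⟨k, hk⟩ => ?_⟩, fun _ φ hφ hs X => ?_⟩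
  · obtain ⟨k, hk, -⟩ := hpow φ hφ hs
    exact ⟨k, hk⟩
  · subst hk
    exact ⟨amplification ℂ n k, (amplification ℂ n k).toLinearMap.continuous_of_finiteDimensional,
      AlgHom.spectrum_apply_subset _⟩
  · obtain ⟨k, rfl, hk⟩ := hpow φ hφ hs
    rw [Nat.mul_div_cancel_left k hn]
    exact ⟨hk X, spectrum_eq_of_charpoly_eq_pow (Nat.pos_of_mul_pos_left hm).ne' (hk X)⟩
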